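/- arXiv:2110.10264 — 4 statements merged into one kernel-verified Lean document; each statement's English description precedes it below -/
import Mathlib

section
/- Let R be a commutative ring. Every minimal prime ideal of R (i.e., every prime ideal of R minimal over the zero ideal) is an r-ideal. -/
/-- A proper ideal `N` of a commutative ring is an `r`-ideal if whenever
`a * b ∈ N` and `ann(a) = 0` (i.e. `a` is regular), then `b ∈ N`. -/
def IsRIdeal {R : Type*} [CommRing R] (N : Ideal R) : Prop :=
  N ≠ ⊤ ∧ ∀ a b : R, a * b ∈ N → (∀ r : R, r * a = 0 → r = 0) → b ∈ N

theorem isRIdeal_of_isPrime_of_disjoint_nonZeroDivisors {R : Type*} [CommRing R] {P : Ideal R}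
    (hP : P.IsPrime) (hdisj : Disjoint (P : Set R) (nonZeroDivisors R)) : IsRIdeal P := by
  refine ⟨hP.ne_top, fun a b hab ha ↦ ?_⟩
  have ha_regular : a ∈ nonZeroDivisors R := mem_nonZeroDivisors_iff_right.mpr ha
  have ha_notMem : a ∉ P := Set.disjoint_right.mp hdisj ha_regular
  exact (hP.mem_or_mem hab).resolve_left ha_notMem

/-- every minimal prime ideal of `R` is an `r`-ideal. -/
theorem minimalPrime_isRIdeal {R : Type*} [CommRing R] (P : Ideal R)
    (hP : P ∈ minimalPrimes R) : IsRIdeal P :=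
  isRIdeal_of_isPrime_of_disjoint_nonZeroDivisors hP.isPrime
    (Ideal.disjoint_nonZeroDivisors_of_mem_minimalPrimes hP)
end

section
/- Let R be a commutative ring and x, y ∈ R with x + y = 1. If the ideal N = ann(x) + ann(y) is a proper ideal of R, then N is an r-ideal. -/
/-- The annihilator ideal `ann(x) = {r ∈ R : r * x = 0}`. -/
def annIdeal {R : Type*} [CommRing R] (x : R) : Ideal R where
  carrier := {r : R | r * x = 0}
  add_mem' := by
    intro a b ha hb
    simp only [Set.mem_setOf_eq] at *
    rw [add_mul, ha, hb, add_zero]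
  zero_mem' := by simp
  smul_mem' := by
    intro c a ha
    simp only [Set.mem_setOf_eq, smul_eq_mul] at *
    rw [mul_assoc, ha, mul_zero]

section

variable {R : Type*} [CommRing R]

theorem mem_annIdeal {r x : R} : r ∈ annIdeal x ↔ r * x = 0 :=
  Iff.rfl

theorem isRIdeal_annIdeal_of_ne_top {z : R} (hz : annIdeal z ≠ ⊤) :
    IsRIdeal (annIdeal z) := by
  refine ⟨hz, fun a b hab ha => ?_⟩
  rw [mem_annIdeal] at hab ⊢
  apply ha
  rwa [mul_comm, ← mul_assoc]

theorem annIdeal_add_annIdeal_le_annIdeal_mul (x y : R) :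
    annIdeal x + annIdeal y ≤ annIdeal (x * y) := by
  refine sup_le (fun r hr => ?_) (fun r hr => ?_) <;> rw [mem_annIdeal] at hr ⊢
  · rw [← mul_assoc, hr, zero_mul]
  · rw [mul_left_comm, hr, mul_zero]

theorem annIdeal_add_annIdeal_eq_annIdeal_mul {x y : R} (hxy : IsCoprime x y) :
    annIdeal x + annIdeal y = annIdeal (x * y) := by
  refine le_antisymm (annIdeal_add_annIdeal_le_annIdeal_mul x y) fun b hb => ?_
  rw [mem_annIdeal] at hb
  obtain ⟨u, v, huv⟩ := hxy
  have mem_ann_x : v * b * y ∈ annIdeal x := by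
    rw [mem_annIdeal]
    linear_combination v * hb
  have mem_ann_y : u * b * x ∈ annIdeal y := by
    rw [mem_annIdeal]
    linear_combination u * hb
  have decomposition : v * b * y + u * b * x = b := by
    linear_combination b * huv
  exact decomposition ▸ Submodule.add_mem_sup mem_ann_x mem_ann_y

theorem ann_add_ann_isRIdeal_general {x y : R} (hxy : IsCoprime x y)
    (hproper : annIdeal x + annIdeal y ≠ ⊤) :
    IsRIdeal (annIdeal x + annIdeal y) := by
  rw [annIdeal_add_annIdeal_eq_annIdeal_mul hxy] at hproper ⊢
  exact isRIdeal_annIdeal_of_ne_top hproper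

end

/-- if `x + y = 1` and `N = ann(x) + ann(y)` is proper,
then `N` is an `r`-ideal. -/
theorem ann_add_ann_isRIdeal {R : Type*} [CommRing R] (x y : R) (hxy : x + y = 1)
    (hproper : annIdeal x + annIdeal y ≠ ⊤) :
    IsRIdeal (annIdeal x + annIdeal y) :=
  ann_add_ann_isRIdeal_general ⟨1, 1, by rwa [one_mul, one_mul]⟩ hproper
end

section
/- Let R be a commutative ring, N an r-ideal of R, and I a prime ideal of R that is minimal over N (I ∈ Min(N)). Then I is an r-ideal of R. -/
section

open scoped nonZeroDivisors

variable {R : Type*} [CommRing R] {N I : Ideal R}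

theorem IsRIdeal.mem_of_mul_mem (hN : IsRIdeal N) {a b : R} (ha : a ∈ R⁰) (hab : a * b ∈ N) :
    b ∈ N :=
  hN.2 a b hab (mem_nonZeroDivisors_iff_right.mp ha)

theorem isRIdeal_iff_disjoint_nonZeroDivisors [hI : I.IsPrime] :
    IsRIdeal I ↔ Disjoint (I : Set R) R⁰ := by
  rw [Set.disjoint_left]
  constructor
  · intro hrI a haI ha
    have one_mem : (1 : R) ∈ I := hrI.mem_of_mul_mem ha (by rwa [mul_one])
    exact hI.one_notMem one_mem
  · intro hdisj
    refine ⟨hI.ne_top, fun a b hab ha => (hI.mem_or_mem hab).resolve_left fun haI => ?_⟩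
    exact hdisj haI (mem_nonZeroDivisors_iff_right.mpr ha)

theorem IsRIdeal.disjoint_nonZeroDivisors_of_mem_minimalPrimes (hN : IsRIdeal N)
    (hI : I ∈ N.minimalPrimes) : Disjoint (I : Set R) R⁰ := by
  refine Set.disjoint_left.mpr fun a haI ha => ?_
  obtain ⟨y, hyN, hayN⟩ := Ideal.exists_mul_mem_of_mem_minimalPrimes hI haI
  exact hyN (hN.mem_of_mul_mem ha hayN)

end

/-- if `N` is an `r`-ideal and `I` is a prime ideal minimal over `N`,
then `I` is an `r`-ideal. -/
theorem minimalPrime_over_rIdeal_isRIdeal {R : Type*} [CommRing R] (N I : Ideal R)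
    (hN : IsRIdeal N) (hI : I ∈ N.minimalPrimes) : IsRIdeal I := by
  have : I.IsPrime := hI.isPrime
  exact isRIdeal_iff_disjoint_nonZeroDivisors.mpr
    (hN.disjoint_nonZeroDivisors_of_mem_minimalPrimes hI)
end

section
/- Let R be a commutative ring and N an r-ideal of R that is maximal with respect to inclusion among all r-ideals of R (i.e., no r-ideal of R strictly contains N). Then N is a prime ideal of R. -/
theorem isPrime_of_colon_singleton_le {R : Type*} [CommSemiring R] {I : Ideal R} (hI : I ≠ ⊤)
    (hcolon : ∀ a ∉ I, I.colon {a} ≤ I) : I.IsPrime where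
  ne_top' := hI
  mem_or_mem' {a b} hab := by
    refine or_iff_not_imp_left.mpr fun ha ↦ hcolon a ha ?_
    rwa [Submodule.mem_colon_singleton, smul_eq_mul, mul_comm]

theorem IsRIdeal.colon {R : Type*} [CommRing R] {N : Ideal R} (hN : IsRIdeal N) {S : Set R}
    (hS : ¬S ⊆ N) : IsRIdeal (N.colon S) := by
  refine ⟨mt (Submodule.colon_eq_top_iff_subset S).mp hS, fun a b hab ha ↦ ?_⟩
  refine Submodule.mem_colon.mpr fun s hs ↦ hN.2 a (b * s) ?_ ha
  rw [← mul_assoc]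
  exact Submodule.mem_colon.mp hab s hs

/-- an `r`-ideal maximal (w.r.t. inclusion) among all `r`-ideals of `R`
is a prime ideal. -/
theorem maximal_rIdeal_isPrime {R : Type*} [CommRing R] (N : Ideal R)
    (hN : IsRIdeal N) (hmax : ∀ M : Ideal R, IsRIdeal M → N ≤ M → N = M) :
    N.IsPrime := by
  refine isPrime_of_colon_singleton_le hN.1 fun a ha ↦ ?_
  have hcolon : IsRIdeal (N.colon {a}) := hN.colon (mt Set.singleton_subset_iff.mp ha)
  exact (hmax _ hcolon Ideal.le_colon).ge
end
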